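/- For every integer n ≥ 1 and every edge e of C_{2n+1} ∨ O_{2n} that is not an edge of the cycle C_{2n+1} (i.e., e is a join edge), χ_la((C_{2n+1} ∨ O_{2n}) − e) = 4. -/

import Mathlib

open Finset SimpleGraph
open scoped Classical

/-- The induced vertex label (weight) of `x`: the sum of `f` over all edges incident to `x`. -/
noncomputable def vertexWeight {V : Type*} [Fintype V] (G : SimpleGraph V)
    (f : Sym2 V → ℕ) (x : V) : ℕ :=
  ∑ e ∈ G.edgeFinset.filter (fun e => x ∈ e), f e

/-- `f` is a local antimagic labeling of `G`: it restricts to a bijection from the edge set of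
`G` onto `{1, …, q}` (where `q` is the number of edges), and adjacent vertices get distinct
induced vertex labels. -/
def IsLocalAntimagic {V : Type*} [Fintype V] (G : SimpleGraph V) (f : Sym2 V → ℕ) : Prop :=
  Set.BijOn f G.edgeSet (Set.Icc 1 G.edgeSet.ncard) ∧
  ∀ ⦃x y : V⦄, G.Adj x y → vertexWeight G f x ≠ vertexWeight G f y

/-- The number of distinct induced vertex labels, `c(f)`. -/
noncomputable def colorCount {V : Type*} [Fintype V] (G : SimpleGraph V)
    (f : Sym2 V → ℕ) : ℕ :=
  (Finset.univ.image (vertexWeight G f)).card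

/-- The local antimagic chromatic number `χ_la(G)`. -/
noncomputable def chiLA {V : Type*} [Fintype V] (G : SimpleGraph V) : ℕ :=
  sInf { n | ∃ f : Sym2 V → ℕ, IsLocalAntimagic G f ∧ colorCount G f = n }

/-- The join `G ∨ H` of two vertex-disjoint graphs. -/
def joinG {α β : Type*} (G : SimpleGraph α) (H : SimpleGraph β) : SimpleGraph (α ⊕ β) :=
  SimpleGraph.fromRel (fun x y =>
    (∃ a b, x = Sum.inl a ∧ y = Sum.inl b ∧ G.Adj a b) ∨
    (∃ a b, x = Sum.inr a ∧ y = Sum.inr b ∧ H.Adj a b) ∨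
    (∃ a b, x = Sum.inl a ∧ y = Sum.inr b))

/-!
The edges of `C_{2n+1} ∨ O_{2n}` correspond to the cells of a semimagic square of order `2n + 1`
with entries `0, …, (2n + 1)² - 1`: one column labels the cycle edges, the other `2n` columns label
the join edges. Null vertices then have the magic sum `S` as weight. With the rows and the cells of
the special column suitably ordered along the cycle, the cycle vertices get the weights `S + 2n²`,
`S + 2n(n + 1)` and `S + 2n(n + 2)`. Rotating the cycle and permuting the null vertices moves the
entry `0` to the edge to be deleted, and deleting an edge with label `0` changes no weight.
Conversely the weights properly color the graph, in which some vertex is still joined to all of the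
odd cycle, so at least `3 + 1` of them are distinct.
-/

section Labeling

variable {V : Type*} [Fintype V] {G : SimpleGraph V} {f : Sym2 V → ℕ}

theorem vertexWeight_eq_sum_adj (G : SimpleGraph V) [DecidableRel G.Adj] (f : Sym2 V → ℕ)
    (x : V) : vertexWeight G f x = ∑ y with G.Adj x y, f s(x, y) := by
  rw [vertexWeight, ← sum_image (f := f) fun _ _ _ _ => Sym2.congr_right.mp]
  refine sum_congr ?_ fun _ _ => rfl
  ext e
  simp only [mem_filter, mem_edgeFinset, mem_image, mem_univ, true_and]
  constructor
  · rintro ⟨he, y, rfl⟩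
    exact ⟨y, he, rfl⟩
  · rintro ⟨y, hy, rfl⟩
    exact ⟨hy, Sym2.mem_mk_left x y⟩

theorem vertexWeight_deleteEdges_of_eq_zero {e : Sym2 V} (he : f e = 0) :
    vertexWeight (G.deleteEdges {e}) f = vertexWeight G f := by
  ext x
  refine sum_subset (fun d hd => ?_) fun d hd hd' => ?_
  · simp only [mem_filter, mem_edgeFinset, edgeSet_deleteEdges] at hd ⊢
    exact ⟨hd.1.1, hd.2⟩
  · simp only [mem_filter, mem_edgeFinset, edgeSet_deleteEdges] at hd hd'
    have hde : d = e := by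
      by_contra hne
      exact hd' ⟨⟨hd.1, hne⟩, hd.2⟩
    rw [hde, he]

theorem isLocalAntimagic_deleteEdges_of_eq_zero {e : Sym2 V} (heG : e ∈ G.edgeSet) (he : f e = 0)
    (hbij : Set.BijOn f G.edgeSet (Set.Iio G.edgeSet.ncard))
    (hadj : ∀ ⦃x y : V⦄, G.Adj x y → vertexWeight G f x ≠ vertexWeight G f y) :
    IsLocalAntimagic (G.deleteEdges {e}) f := by
  refine ⟨?_, fun x y hxy => ?_⟩
  · have hIcc : Set.Icc 1 (G.edgeSet \ {e}).ncard = Set.Iio G.edgeSet.ncard \ {f e} := by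
      ext k
      have hpos : 0 < G.edgeSet.ncard := (Set.ncard_pos (Set.toFinite _)).mpr ⟨e, heG⟩
      simp only [Set.ncard_sdiff_singleton_of_mem heG, he, Set.mem_Icc, Set.mem_sdiff, Set.mem_Iio,
        Set.mem_singleton_iff]
      omega
    rw [edgeSet_deleteEdges, hIcc]
    exact hbij.sdiff_singleton heG
  · rw [vertexWeight_deleteEdges_of_eq_zero he]
    exact hadj (deleteEdges_adj.mp hxy).1

theorem IsLocalAntimagic.chromaticNumber_le_colorCount (hf : IsLocalAntimagic G f) :
    G.chromaticNumber ≤ colorCount G f := by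
  let C : G.Coloring (univ.image (vertexWeight G f)) :=
    Coloring.mk (fun x => ⟨vertexWeight G f x, mem_image_of_mem _ (mem_univ x)⟩)
      fun hxy h => hf.2 hxy (congrArg Subtype.val h)
  simpa only [colorCount, Fintype.card_coe] using C.colorable.chromaticNumber_le

theorem IsLocalAntimagic.chiLA_eq_of_le_chromaticNumber {k : ℕ} (hf : IsLocalAntimagic G f)
    (hle : colorCount G f ≤ k) (hge : (k : ℕ∞) ≤ G.chromaticNumber) : chiLA G = k := by
  have lower : ∀ g, IsLocalAntimagic G g → k ≤ colorCount G g := fun g hg => by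
    exact_mod_cast hge.trans hg.chromaticNumber_le_colorCount
  have hmem : k ∈ {c | ∃ g, IsLocalAntimagic G g ∧ colorCount G g = c} :=
    ⟨f, hf, hle.antisymm (lower f hf)⟩
  refine le_antisymm (Nat.sInf_le hmem) (le_csInf ⟨k, hmem⟩ ?_)
  rintro _ ⟨g, hg, rfl⟩
  exact lower g hg

end Labeling

section Join

variable {α β : Type*} {G : SimpleGraph α} {H : SimpleGraph β}

@[simp]
theorem joinG_adj_inl_inl {u v : α} :
    (joinG G H).Adj (Sum.inl u) (Sum.inl v) ↔ G.Adj u v := by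
  simpa [joinG, G.adj_comm v u] using fun h : G.Adj u v => h.ne

@[simp]
theorem joinG_adj_inr_inr {u v : β} :
    (joinG G H).Adj (Sum.inr u) (Sum.inr v) ↔ H.Adj u v := by
  simpa [joinG, H.adj_comm v u] using fun h : H.Adj u v => h.ne

@[simp]
theorem joinG_adj_inl_inr {u : α} {v : β} : (joinG G H).Adj (Sum.inl u) (Sum.inr v) := by
  simp [joinG]

@[simp]
theorem joinG_adj_inr_inl {u : β} {v : α} : (joinG G H).Adj (Sum.inr u) (Sum.inl v) :=
  joinG_adj_inl_inr.symm

theorem vertexWeight_joinG_inl [Fintype α] [Fintype β] (f : Sym2 (α ⊕ β) → ℕ) (u : α) :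
    vertexWeight (joinG G H) f (Sum.inl u) =
      vertexWeight G (f ∘ Sym2.map Sum.inl) u + ∑ v, f s(Sum.inl u, Sum.inr v) := by
  simp [vertexWeight_eq_sum_adj, sum_filter, Fintype.sum_sum_type]

theorem vertexWeight_joinG_inr [Fintype α] [Fintype β] (f : Sym2 (α ⊕ β) → ℕ) (v : β) :
    vertexWeight (joinG G H) f (Sum.inr v) =
      ∑ u, f s(Sum.inl u, Sum.inr v) + vertexWeight H (f ∘ Sym2.map Sum.inr) v := by
  simp [vertexWeight_eq_sum_adj, sum_filter, Fintype.sum_sum_type,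
    Sym2.eq_swap (a := Sum.inr v) (b := Sum.inl _)]

theorem chromaticNumber_add_one_le_of_hom_of_forall_adj {V : Type*} {K : SimpleGraph V}
    (φ : G →g K) {x : V} (hx : ∀ u, K.Adj (φ u) x) :
    G.chromaticNumber + 1 ≤ K.chromaticNumber := by
  refine le_iInf₂ fun k ⟨C⟩ => ?_
  let D : G.Coloring {c // c ≠ C x} :=
    Coloring.mk (fun u => ⟨C (φ u), C.valid (hx u)⟩)
      fun huv h => C.valid (φ.map_adj huv) (congrArg Subtype.val h)
  have hcard : Fintype.card {c // c ≠ C x} + 1 = k := by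
    have := Fin.pos (C x)
    rw [Fintype.card_subtype_compl, Fintype.card_subtype_eq, Fintype.card_fin]
    omega
  calc G.chromaticNumber + 1 ≤ Fintype.card {c // c ≠ C x} + 1 := by
        gcongr
        exact D.colorable.chromaticNumber_le
    _ = k := by exact_mod_cast hcard

theorem chromaticNumber_add_one_le_joinG_deleteEdges [Nontrivial β] (a : α) (b : β) :
    G.chromaticNumber + 1 ≤
      ((joinG G H).deleteEdges {s(Sum.inl a, Sum.inr b)}).chromaticNumber := by
  obtain ⟨k, hk⟩ := exists_ne b
  let φ : G →g (joinG G H).deleteEdges {s(Sum.inl a, Sum.inr b)} :=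
    ⟨Sum.inl, fun huv => by simpa using huv⟩
  refine chromaticNumber_add_one_le_of_hom_of_forall_adj φ (x := Sum.inr k) fun u => ?_
  simp [φ, hk]

end Join

section CycleJoinNull

variable {m : ℕ} [NeZero m] {β : Type*}

theorem cycleGraph_adj_iff_eq_add_one (hm : 2 ≤ m) {u v : Fin m} :
    (cycleGraph m).Adj u v ↔ v = u + 1 ∨ u = v + 1 := by
  obtain ⟨k, rfl⟩ := Nat.exists_eq_add_of_le' hm
  rw [cycleGraph_adj, sub_eq_iff_eq_add', sub_eq_iff_eq_add', or_comm]

theorem add_one_add_one_ne_self (hm : 3 ≤ m) (v : Fin m) : v + 1 + 1 ≠ v := by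
  obtain ⟨k, rfl⟩ := Nat.exists_eq_add_of_le' hm
  rw [add_assoc, Ne, add_eq_left, Fin.ext_iff]
  simp [Fin.val_add, Nat.mod_eq_of_lt]

theorem vertexWeight_cycleGraph (hm : 3 ≤ m) (f : Sym2 (Fin m) → ℕ) (v : Fin m) :
    vertexWeight (cycleGraph m) f v = f s(v - 1, v) + f s(v, v + 1) := by
  have hnbr : ({u | (cycleGraph m).Adj v u} : Finset (Fin m)) = {v - 1, v + 1} := by
    ext u
    simp only [cycleGraph_adj_iff_eq_add_one (by omega : 2 ≤ m), mem_filter, mem_univ, true_and,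
      mem_insert, mem_singleton, eq_sub_iff_add_eq, eq_comm (a := v), or_comm]
  have hne : v - 1 ≠ v + 1 := fun h =>
    add_one_add_one_ne_self hm v (by rw [← h, sub_add_cancel])
  rw [vertexWeight_eq_sum_adj, hnbr, sum_pair hne, Sym2.eq_swap]

/-- The enumeration of the edges of `C_m ∨ O_β`: the index `inl v` stands for the cycle edge
`{v, v + 1}`, the index `inr (v, k)` for the join edge `{v, k}`. -/
def cycleJoinNullEdge : Fin m ⊕ Fin m × β → Sym2 (Fin m ⊕ β)
  | Sum.inl v => s(Sum.inl v, Sum.inl (v + 1))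
  | Sum.inr (v, k) => s(Sum.inl v, Sum.inr k)

theorem cycleJoinNullEdge_injective (hm : 3 ≤ m) :
    Function.Injective (cycleJoinNullEdge (m := m) (β := β)) := by
  rintro (u | ⟨u, j⟩) (v | ⟨v, k⟩) h
  · simp only [cycleJoinNullEdge, Sym2.eq_iff, Sum.inl.injEq] at h
    rcases h with ⟨rfl, -⟩ | ⟨rfl, h⟩
    · rfl
    · exact absurd h (add_one_add_one_ne_self hm v)
  · simp [cycleJoinNullEdge] at h
  · simp [cycleJoinNullEdge] at h
  · simpa [cycleJoinNullEdge] using h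

theorem range_cycleJoinNullEdge (hm : 2 ≤ m) :
    Set.range cycleJoinNullEdge = (joinG (cycleGraph m) (⊥ : SimpleGraph β)).edgeSet := by
  refine Set.Subset.antisymm ?_ fun e => Sym2.ind (fun x y hxy => ?_) e
  · rintro _ ⟨v | ⟨v, k⟩, rfl⟩
    · simp [cycleJoinNullEdge, cycleGraph_adj_iff_eq_add_one hm]
    · simp [cycleJoinNullEdge]
  · rw [mem_edgeSet] at hxy
    rcases x with u | j <;> rcases y with v | k
    · rcases (cycleGraph_adj_iff_eq_add_one hm).mp (joinG_adj_inl_inl.mp hxy) with rfl | rfl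
      · exact ⟨Sum.inl u, rfl⟩
      · exact ⟨Sum.inl v, Sym2.eq_swap⟩
    · exact ⟨Sum.inr (u, k), rfl⟩
    · exact ⟨Sum.inr (v, j), Sym2.eq_swap⟩
    · exact (joinG_adj_inr_inr.mp hxy).elim

variable (L : Fin m ⊕ Fin m × β → ℕ)

/-- The edge labeling of `C_m ∨ O_β` that gives the edge with index `p` the label `L p`;
pairs of vertices that are not edges get the value `0`. -/
noncomputable def cycleJoinNullLabel : Sym2 (Fin m ⊕ β) → ℕ :=
  Function.extend cycleJoinNullEdge L 0

theorem cycleJoinNullLabel_cycleEdge (hm : 3 ≤ m) (v : Fin m) :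
    cycleJoinNullLabel L s(Sum.inl v, Sum.inl (v + 1)) = L (Sum.inl v) :=
  (cycleJoinNullEdge_injective hm).extend_apply L 0 (Sum.inl v)

theorem cycleJoinNullLabel_joinEdge (hm : 3 ≤ m) (v : Fin m) (k : β) :
    cycleJoinNullLabel L s(Sum.inl v, Sum.inr k) = L (Sum.inr (v, k)) :=
  (cycleJoinNullEdge_injective hm).extend_apply L 0 (Sum.inr (v, k))

variable {L}

theorem bijOn_cycleJoinNullLabel [Fintype β] (hm : 3 ≤ m) (hinj : Function.Injective L)
    (hlt : ∀ p, L p < m + m * Fintype.card β) :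
    Set.BijOn (cycleJoinNullLabel L) (joinG (cycleGraph m) (⊥ : SimpleGraph β)).edgeSet
      (Set.Iio (joinG (cycleGraph m) (⊥ : SimpleGraph β)).edgeSet.ncard) := by
  have hedge : Function.Injective (cycleJoinNullEdge (m := m) (β := β)) :=
    cycleJoinNullEdge_injective hm
  have happly (p) : cycleJoinNullLabel L (cycleJoinNullEdge p) = L p := hedge.extend_apply L 0 p
  have hncard : (Set.range (cycleJoinNullEdge (m := m) (β := β))).ncard =
      m + m * Fintype.card β := by
    rw [← Set.image_univ, Set.ncard_image_of_injective _ hedge, Set.ncard_univ,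
      Nat.card_eq_fintype_card, Fintype.card_sum, Fintype.card_prod, Fintype.card_fin]
  rw [← range_cycleJoinNullEdge (by omega), hncard]
  have hmaps : Set.MapsTo (cycleJoinNullLabel L) (Set.range cycleJoinNullEdge)
      (Set.Iio (m + m * Fintype.card β)) := by
    rintro _ ⟨p, rfl⟩
    exact (happly p).trans_lt (hlt p)
  have hinjOn : Set.InjOn (cycleJoinNullLabel L) (Set.range cycleJoinNullEdge) := by
    rintro _ ⟨p, rfl⟩ _ ⟨q, rfl⟩ h
    rw [happly, happly] at h
    rw [hinj h]
  refine ⟨hmaps, hinjOn, (Set.eq_of_subset_of_ncard_le hmaps.image_subset ?_).ge⟩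
  rw [hinjOn.ncard_image, hncard, ← Finset.coe_Iio, Set.ncard_coe_finset, Nat.card_Iio]

theorem vertexWeight_cycleJoinNullLabel_inl [Fintype β] (hm : 3 ≤ m) (v : Fin m) :
    vertexWeight (joinG (cycleGraph m) (⊥ : SimpleGraph β)) (cycleJoinNullLabel L) (Sum.inl v) =
      L (Sum.inl (v - 1)) + L (Sum.inl v) + ∑ k, L (Sum.inr (v, k)) := by
  have hprev := cycleJoinNullLabel_cycleEdge L hm (v - 1)
  rw [sub_add_cancel] at hprev
  simp only [vertexWeight_joinG_inl, vertexWeight_cycleGraph hm, Function.comp_apply, Sym2.map_mk,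
    hprev, cycleJoinNullLabel_cycleEdge L hm, cycleJoinNullLabel_joinEdge L hm]

theorem vertexWeight_cycleJoinNullLabel_inr [Fintype β] (hm : 3 ≤ m) (k : β) :
    vertexWeight (joinG (cycleGraph m) (⊥ : SimpleGraph β)) (cycleJoinNullLabel L) (Sum.inr k) =
      ∑ v, L (Sum.inr (v, k)) := by
  simp [vertexWeight_joinG_inr, vertexWeight_eq_sum_adj (⊥ : SimpleGraph β),
    cycleJoinNullLabel_joinEdge L hm]

end CycleJoinNull

section SemimagicSquare

variable {m : ℕ} [NeZero m]

/-- The `m × m` square with the base-`m` digits `i + j` and `j - i - 1` in the cell `(i, j)`, both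
taken modulo `m`. For odd `m` its entries are `0, …, m² - 1`, each once; all rows and columns have
the sum `semimagicSum m`. -/
def semimagicSquare (i j : Fin m) : ℕ :=
  m * (i + j).val + (j - i - 1).val

/-- The common row and column sum of `semimagicSquare` of order `m`. -/
def semimagicSum (m : ℕ) : ℕ :=
  (m + 1) * ∑ k : Fin m, k.val

theorem sum_semimagicSquare_row (i : Fin m) : ∑ j, semimagicSquare i j = semimagicSum m := by
  have hhigh : ∑ j : Fin m, (i + j).val = ∑ k : Fin m, k.val :=
    Equiv.sum_comp (Equiv.addLeft i) Fin.val
  have hlow : ∑ j : Fin m, (j - i - 1).val = ∑ k : Fin m, k.val :=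
    Equiv.sum_comp ((Equiv.subRight i).trans (Equiv.subRight 1)) Fin.val
  simp only [semimagicSquare, sum_add_distrib, ← mul_sum, hhigh, hlow, semimagicSum, add_one_mul]

theorem sum_semimagicSquare_col (j : Fin m) : ∑ i, semimagicSquare i j = semimagicSum m := by
  have hhigh : ∑ i : Fin m, (i + j).val = ∑ k : Fin m, k.val :=
    Equiv.sum_comp (Equiv.addRight j) Fin.val
  have hlow : ∑ i : Fin m, (j - i - 1).val = ∑ k : Fin m, k.val :=
    Equiv.sum_comp ((Equiv.subLeft j).trans (Equiv.subRight 1)) Fin.val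
  simp only [semimagicSquare, sum_add_distrib, ← mul_sum, hhigh, hlow, semimagicSum, add_one_mul]

theorem semimagicSquare_lt (i j : Fin m) : semimagicSquare i j < m * m :=
  calc m * (i + j).val + (j - i - 1).val < m * (i + j).val + m := by gcongr; exact Fin.is_lt _
    _ = m * ((i + j).val + 1) := by ring
    _ ≤ m * m := by gcongr; exact Fin.is_lt _

theorem semimagicSquare_injective (hm : Odd m) :
    Function.Injective fun p : Fin m × Fin m => semimagicSquare p.1 p.2 := by
  rintro ⟨i, j⟩ ⟨i', j'⟩ h
  have hhigh : i + j = i' + j' := by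
    have hdiv := congrArg (· / m) h
    simp only [semimagicSquare, Nat.mul_add_div (NeZero.pos m), Nat.div_eq_of_lt (Fin.is_lt _),
      add_zero] at hdiv
    exact Fin.ext hdiv
  have hlow : j - i = j' - i' := by
    simp only [semimagicSquare, hhigh, Nat.add_left_cancel_iff] at h
    exact sub_left_injective (Fin.ext h)
  have hdouble : 2 • j = 2 • j' :=
    calc 2 • j = (i + j) + (j - i) := by abel
      _ = (i' + j') + (j' - i') := by rw [hhigh, hlow]
      _ = 2 • j' := by abel
  have hcoprime : (Nat.card (Fin m)).Coprime 2 := by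
    rwa [Nat.card_eq_fintype_card, Fintype.card_fin, Nat.coprime_two_right]
  obtain rfl : j = j' := (Nat.Coprime.nsmul_right_bijective hcoprime).injective hdouble
  rw [add_right_cancel hhigh]

theorem semimagicSquare_zero_right (i : Fin m) : semimagicSquare i 0 = (m - 1) * (i.val + 1) := by
  obtain ⟨k, rfl⟩ := Nat.exists_eq_add_of_le' (NeZero.pos m)
  have hrev : 0 - i - 1 = i.rev := by
    rw [sub_eq_iff_eq_add, sub_eq_iff_eq_add, Fin.ext_iff]
    simp [Fin.val_add, show k - i.val + 1 + i.val = k + 1 by omega]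
  calc semimagicSquare i 0 = k * i.val + (i.val + (k + 1 - (i.val + 1))) := by
        rw [semimagicSquare, add_zero, hrev, Fin.val_rev]
        ring
    _ = k * (i.val + 1) := by rw [show i.val + (k + 1 - (i.val + 1)) = k by omega, mul_add_one]

theorem semimagicSquare_add_one_eq_zero {i : Fin m} (hi : i + (i + 1) = 0) :
    semimagicSquare i (i + 1) = 0 := by
  simp [semimagicSquare, hi]

end SemimagicSquare

section SquareLabel

variable {n : ℕ}

/-- The zigzag order `0, n + 1, 1, n + 2, …, 2 * n, n` of the entries in the special column, in
which neighbouring terms have the consecutive sums `n + 1, n + 2, …, 3 * n`. -/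
def zigzag (t : Fin (2 * n + 1)) : Fin (2 * n + 1) :=
  ⟨if t.val % 2 = 0 then t.val / 2 else n + 1 + t.val / 2, by split_ifs <;> omega⟩

/-- The involution exchanging `2 * k` and `2 * k + 1` for `k < n` and fixing `2 * n`. -/
def pairSwap : Equiv.Perm (Fin (2 * n + 1)) :=
  Function.Involutive.toPerm
    (fun t => ⟨if t.val = 2 * n then t.val else if t.val % 2 = 0 then t.val + 1 else t.val - 1,
      by split_ifs <;> omega⟩)
    fun t => by ext; dsimp only; split_ifs <;> omega

/-- The displacement `t + 1 - pairSwap t`, a proper `3`-coloring of the cycle `C_{2n+1}`. -/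
def pairSwapOffset (t : Fin (2 * n + 1)) : ℕ :=
  if t.val = 2 * n then 1 else if t.val % 2 = 0 then 0 else 2

theorem val_add_one_eq_ite (t : Fin (2 * n + 1)) :
    (t + 1).val = if t.val = 2 * n then 0 else t.val + 1 := by
  simp only [Fin.val_add_one, Fin.ext_iff, Fin.val_last]

theorem zigzag_injective : Function.Injective (zigzag (n := n)) := by
  intro s t h
  simp only [zigzag, Fin.ext_iff] at h ⊢
  split_ifs at h <;> omega

theorem zigzag_add_zigzag_add_one (t : Fin (2 * n + 1)) :
    (zigzag t).val + (zigzag (t + 1)).val = n + (t + 1).val := by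
  simp only [zigzag, val_add_one_eq_ite]
  split_ifs <;> omega

theorem val_pairSwap (t : Fin (2 * n + 1)) :
    (pairSwap t).val =
      if t.val = 2 * n then t.val else if t.val % 2 = 0 then t.val + 1 else t.val - 1 :=
  rfl

theorem pairSwap_add_pairSwapOffset (t : Fin (2 * n + 1)) :
    (pairSwap t).val + pairSwapOffset t = t.val + 1 := by
  rw [val_pairSwap, pairSwapOffset]
  split_ifs <;> omega

theorem pairSwapOffset_add_one_ne (hn : 1 ≤ n) (t : Fin (2 * n + 1)) :
    pairSwapOffset (t + 1) ≠ pairSwapOffset t := by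
  simp only [pairSwapOffset, val_add_one_eq_ite]
  split_ifs <;> omega

variable (c : Fin (2 * n + 1)) (σ : Equiv.Perm (Fin (2 * n)))

/-- The cell of the semimagic square whose entry labels the edge of `C_{2n+1} ∨ O_{2n}` with a given
index: cycle edges take their labels from column `0`, join edges from the other columns. The cycle
is rotated by `c` and the null vertices are permuted by `σ`. -/
def squareCell : Fin (2 * n + 1) ⊕ Fin (2 * n + 1) × Fin (2 * n) →
    Fin (2 * n + 1) × Fin (2 * n + 1)
  | Sum.inl v => (zigzag (v + c), 0)
  | Sum.inr (v, k) => (pairSwap (v + c), (σ k).succ)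

theorem squareCell_injective : Function.Injective (squareCell c σ) := by
  rintro (u | ⟨u, j⟩) (v | ⟨v, k⟩) h
  · simpa [squareCell, zigzag_injective.eq_iff] using h
  · exact absurd (congrArg Prod.snd h).symm (Fin.succ_ne_zero _)
  · exact absurd (congrArg Prod.snd h) (Fin.succ_ne_zero _)
  · simpa [squareCell] using h

/-- The labeling of the edges of `C_{2n+1} ∨ O_{2n}` by the entries of the semimagic square,
hence by `0, …, q - 1` where `q` is the number of edges. -/
noncomputable def squareLabel : Sym2 (Fin (2 * n + 1) ⊕ Fin (2 * n)) → ℕ :=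
  cycleJoinNullLabel fun p => semimagicSquare (squareCell c σ p).1 (squareCell c σ p).2

theorem bijOn_squareLabel (hn : 1 ≤ n) :
    Set.BijOn (squareLabel c σ)
      (joinG (cycleGraph (2 * n + 1)) (⊥ : SimpleGraph (Fin (2 * n)))).edgeSet
      (Set.Iio (joinG (cycleGraph (2 * n + 1)) (⊥ : SimpleGraph (Fin (2 * n)))).edgeSet.ncard) := by
  refine bijOn_cycleJoinNullLabel (by omega)
    ((semimagicSquare_injective (odd_two_mul_add_one n)).comp (squareCell_injective c σ))
    fun p => (semimagicSquare_lt _ _).trans_eq ?_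
  rw [Fintype.card_fin]
  ring

theorem vertexWeight_squareLabel_inl (hn : 1 ≤ n) (v : Fin (2 * n + 1)) :
    vertexWeight (joinG (cycleGraph (2 * n + 1)) ⊥) (squareLabel c σ) (Sum.inl v) =
      semimagicSum (2 * n + 1) + 2 * n * (n + pairSwapOffset (v + c)) := by
  have hrow : 2 * n * ((pairSwap (v + c)).val + 1) +
      ∑ k, semimagicSquare (pairSwap (v + c)) (σ k).succ = semimagicSum (2 * n + 1) := by
    rw [← sum_semimagicSquare_row (pairSwap (v + c)), Fin.sum_univ_succ,
      semimagicSquare_zero_right,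
      Equiv.sum_comp σ fun k => semimagicSquare (pairSwap (v + c)) k.succ, Nat.add_sub_cancel]
  have hcycle : (zigzag (v - 1 + c)).val + (zigzag (v + c)).val = n + (v + c).val := by
    have := zigzag_add_zigzag_add_one (v - 1 + c)
    rwa [show v - 1 + c + 1 = v + c by abel] at this
  have hoffset := pairSwap_add_pairSwapOffset (v + c)
  rw [squareLabel, vertexWeight_cycleJoinNullLabel_inl (by omega)]
  simp only [squareCell, semimagicSquare_zero_right, Nat.add_sub_cancel]
  linear_combination hrow + 2 * n * hcycle - 2 * n * hoffset

theorem vertexWeight_squareLabel_inr (k : Fin (2 * n)) :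
    vertexWeight (joinG (cycleGraph (2 * n + 1)) ⊥) (squareLabel c σ) (Sum.inr k) =
      semimagicSum (2 * n + 1) := by
  have hn : 0 < 2 * n := k.pos
  rw [squareLabel, vertexWeight_cycleJoinNullLabel_inr (by omega),
    ← sum_semimagicSquare_col (σ k).succ]
  exact Equiv.sum_comp ((Equiv.addRight c).trans pairSwap) fun i => semimagicSquare i (σ k).succ

theorem vertexWeight_squareLabel_ne_of_adj (hn : 1 ≤ n) ⦃x y : Fin (2 * n + 1) ⊕ Fin (2 * n)⦄
    (hxy : (joinG (cycleGraph (2 * n + 1)) ⊥).Adj x y) :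
    vertexWeight (joinG (cycleGraph (2 * n + 1)) ⊥) (squareLabel c σ) x ≠
      vertexWeight (joinG (cycleGraph (2 * n + 1)) ⊥) (squareLabel c σ) y := by
  have hcycle (v : Fin (2 * n + 1)) : pairSwapOffset (v + 1 + c) ≠ pairSwapOffset (v + c) := by
    rw [add_right_comm]
    exact pairSwapOffset_add_one_ne hn (v + c)
  have hn0 : n ≠ 0 := by omega
  rcases x with u | j <;> rcases y with v | k
  · rw [joinG_adj_inl_inl, cycleGraph_adj_iff_eq_add_one (by omega)] at hxy
    rcases hxy with rfl | rfl
    · simpa [vertexWeight_squareLabel_inl, hn, hn0] using (hcycle u).symm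
    · simpa [vertexWeight_squareLabel_inl, hn, hn0] using hcycle v
  · simp [vertexWeight_squareLabel_inl, vertexWeight_squareLabel_inr, hn, hn0]
  · simp [vertexWeight_squareLabel_inl, vertexWeight_squareLabel_inr, hn, hn0]
  · exact (joinG_adj_inr_inr.mp hxy).elim

theorem colorCount_squareLabel_le_four (hn : 1 ≤ n) :
    colorCount (joinG (cycleGraph (2 * n + 1)) ⊥) (squareLabel c σ) ≤ 4 := by
  let S := semimagicSum (2 * n + 1)
  have hsub : univ.image (vertexWeight (joinG (cycleGraph (2 * n + 1)) ⊥) (squareLabel c σ)) ⊆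
      {S, S + 2 * n * (n + 0), S + 2 * n * (n + 1), S + 2 * n * (n + 2)} := by
    refine image_subset_iff.mpr ?_
    rintro (v | k) -
    · rw [vertexWeight_squareLabel_inl c σ hn, pairSwapOffset]
      split_ifs <;> simp [S]
    · simp [vertexWeight_squareLabel_inr c σ, S]
  exact (card_le_card hsub).trans card_le_four

theorem exists_squareLabel_eq_zero (a : Fin (2 * n + 1)) (b : Fin (2 * n)) :
    ∃ c σ, squareLabel c σ s(Sum.inl a, Sum.inr b) = 0 := by
  have hn : 0 < 2 * n := b.pos
  let mid : Fin (2 * n) := ⟨n, by omega⟩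
  have hmid : mid.castSucc + (mid.castSucc + 1) = 0 := by
    rw [Fin.coeSucc_eq_succ, Fin.ext_iff, Fin.val_add]
    simp [mid, show n + (n + 1) = 2 * n + 1 by ring]
  refine ⟨pairSwap.symm mid.castSucc - a, Equiv.swap b mid, ?_⟩
  rw [squareLabel, cycleJoinNullLabel_joinEdge _ (by omega)]
  simpa [squareCell] using semimagicSquare_add_one_eq_zero hmid

end SquareLabel

/-- Theorem: For every integer `n ≥ 1` and every join edge `e` of `C_{2n+1} ∨ O_{2n}` (i.e.
every edge joining a vertex of the cycle with a vertex of the null graph; these are exactly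
the edges not lying on the cycle), `χ_la((C_{2n+1} ∨ O_{2n}) − e) = 4`. -/
theorem chiLA_oddCycle_join_null_even_deleteJoinEdge (n : ℕ) (hn : 1 ≤ n)
    (a : Fin (2 * n + 1)) (b : Fin (2 * n)) :
    chiLA ((joinG (cycleGraph (2 * n + 1)) (⊥ : SimpleGraph (Fin (2 * n)))).deleteEdges
      {s(Sum.inl a, Sum.inr b)}) = 4 := by
  have : Nontrivial (Fin (2 * n)) := Fin.nontrivial_iff_two_le.mpr (by omega)
  obtain ⟨c, σ, hzero⟩ := exists_squareLabel_eq_zero a b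
  have hantimagic := isLocalAntimagic_deleteEdges_of_eq_zero joinG_adj_inl_inr hzero
    (bijOn_squareLabel c σ hn) (vertexWeight_squareLabel_ne_of_adj c σ hn)
  refine hantimagic.chiLA_eq_of_le_chromaticNumber ?_ ?_
  · rw [colorCount, vertexWeight_deleteEdges_of_eq_zero hzero]
    exact colorCount_squareLabel_le_four c σ hn
  · have hcycle := chromaticNumber_cycleGraph_of_odd (2 * n + 1) (by omega) (odd_two_mul_add_one n)
    calc ((4 : ℕ) : ℕ∞) = (cycleGraph (2 * n + 1)).chromaticNumber + 1 := by rw [hcycle]; rfl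
      _ ≤ _ := chromaticNumber_add_one_le_joinG_deleteEdges a b
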